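/- Let (A,⋄,{·,·,·}) be a ternary pre-F-manifold algebra with sub-adjacent ternary F-manifold algebra A^c = (A,·,[·,·,·]), where x·y = x⋄y + y⋄x and [x,y,z] = {x,y,z} + {y,z,x} + {z,x,y}. Define 𝕃 : A×A → End(A) by 𝕃(x,y)z = {x,y,z} and L_⋄ : A → End(A) by L_⋄(x)y = x⋄y. Then (A; 𝕃, L_⋄) is a representation of the ternary F-manifold algebra A^c. -/

import Mathlib

open TensorProduct

/-- The 3-Leibnizator `L(x1,x2,x3,x4) = [x1,x2,x3·x4] − x3·[x1,x2,x4] − [x1,x2,x3]·x4`. -/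
def leib3 {K : Type*} [Field K] {A : Type*} [AddCommGroup A] [Module K A]
    (m : A →ₗ[K] A →ₗ[K] A) (b : A →ₗ[K] A →ₗ[K] A →ₗ[K] A) (x1 x2 x3 x4 : A) : A :=
  b x1 x2 (m x3 x4) - m x3 (b x1 x2 x4) - m (b x1 x2 x3) x4

/-- A ternary F-manifold algebra. -/
structure TernaryFM (K : Type*) [Field K] (A : Type*) [AddCommGroup A] [Module K A] where
  mul : A →ₗ[K] A →ₗ[K] A
  br : A →ₗ[K] A →ₗ[K] A →ₗ[K] A
  mul_comm : ∀ x y, mul x y = mul y x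
  mul_assoc : ∀ x y z, mul (mul x y) z = mul x (mul y z)
  br_skew₁₂ : ∀ x y z, br x y z = - br y x z
  br_skew₂₃ : ∀ x y z, br x y z = - br x z y
  fund : ∀ x1 x2 x3 x4 x5,
    br x1 x2 (br x3 x4 x5) =
      br (br x1 x2 x3) x4 x5 + br x3 (br x1 x2 x4) x5 + br x3 x4 (br x1 x2 x5)
  leib : ∀ x1 x2 x3 x4 x5,
    leib3 mul br (mul x1 x2) x3 x4 x5 =
      mul x1 (leib3 mul br x2 x3 x4 x5) + mul x2 (leib3 mul br x1 x3 x4 x5)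

/-- A commutative associative algebra structure (as a bilinear map). -/
structure CommAssocAlg (K : Type*) [Field K] (B : Type*) [AddCommGroup B] [Module K B] where
  mul : B →ₗ[K] B →ₗ[K] B
  mul_comm : ∀ x y, mul x y = mul y x
  mul_assoc : ∀ x y z, mul (mul x y) z = mul x (mul y z)

/-- A ternary Nambu–Poisson algebra. -/
structure TernaryNP (K : Type*) [Field K] (A : Type*) [AddCommGroup A] [Module K A] where
  mul : A →ₗ[K] A →ₗ[K] A
  br : A →ₗ[K] A →ₗ[K] A →ₗ[K] A
  mul_comm : ∀ x y, mul x y = mul y x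
  mul_assoc : ∀ x y z, mul (mul x y) z = mul x (mul y z)
  br_skew₁₂ : ∀ x y z, br x y z = - br y x z
  br_skew₂₃ : ∀ x y z, br x y z = - br x z y
  fund : ∀ x1 x2 x3 x4 x5,
    br x1 x2 (br x3 x4 x5) =
      br (br x1 x2 x3) x4 x5 + br x3 (br x1 x2 x4) x5 + br x3 x4 (br x1 x2 x5)
  leibniz : ∀ x1 x2 x3 x4,
    br x1 x2 (mul x3 x4) = mul x3 (br x1 x2 x4) + mul (br x1 x2 x3) x4

/-- The binary Leibnizator `L(x,y,z) = [x,y·z] − [x,y]·z − y·[x,z]`. -/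
def leib2 {K : Type*} [Field K] {A : Type*} [AddCommGroup A] [Module K A]
    (m : A →ₗ[K] A →ₗ[K] A) (b : A →ₗ[K] A →ₗ[K] A) (x y z : A) : A :=
  b x (m y z) - m (b x y) z - m y (b x z)

/-- An F-manifold algebra. -/
structure FManifoldAlg (K : Type*) [Field K] (A : Type*) [AddCommGroup A] [Module K A] where
  mul : A →ₗ[K] A →ₗ[K] A
  br : A →ₗ[K] A →ₗ[K] A
  mul_comm : ∀ x y, mul x y = mul y x
  mul_assoc : ∀ x y z, mul (mul x y) z = mul x (mul y z)
  br_skew : ∀ x y, br x y = - br y x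
  jacobi : ∀ x y z, br x (br y z) + br y (br z x) + br z (br x y) = 0
  hm : ∀ x y z w,
    leib2 mul br (mul x y) z w = mul x (leib2 mul br y z w) + mul y (leib2 mul br x z w)

section Rep

variable {K : Type*} [Field K] {A V : Type*} [AddCommGroup A] [Module K A]
  [AddCommGroup V] [Module K V]

/-- Representation of the underlying 3-Lie algebra. -/
def Is3LieRep (T : TernaryFM K A) (ρ : A →ₗ[K] A →ₗ[K] V →ₗ[K] V) : Prop :=
  (∀ x y, ρ x y = - ρ y x) ∧
  (∀ x1 x2 x3 x4,
    ρ x1 x2 ∘ₗ ρ x3 x4 - ρ x3 x4 ∘ₗ ρ x1 x2 = ρ (T.br x1 x2 x3) x4 - ρ (T.br x1 x2 x4) x3) ∧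
  (∀ x1 x2 x3 x4,
    ρ (T.br x1 x2 x3) x4 = ρ x1 x2 ∘ₗ ρ x3 x4 + ρ x2 x3 ∘ₗ ρ x1 x4 + ρ x3 x1 ∘ₗ ρ x2 x4)

/-- Representation of the underlying commutative associative algebra. -/
def IsAssocRep (T : TernaryFM K A) (μ : A →ₗ[K] V →ₗ[K] V) : Prop :=
  ∀ x y, μ (T.mul x y) = μ x ∘ₗ μ y

/-- `L1(x,y,z,u) = ρ(x,y)μ(z)u − μ(z)ρ(x,y)u − μ([x,y,z])u`. -/
def L1 (T : TernaryFM K A) (ρ : A →ₗ[K] A →ₗ[K] V →ₗ[K] V) (μ : A →ₗ[K] V →ₗ[K] V)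
    (x y z : A) (u : V) : V :=
  ρ x y (μ z u) - μ z (ρ x y u) - μ (T.br x y z) u

/-- `L2(x,y,z,u) = μ(z)ρ(x,y)u + μ(y)ρ(x,z)u − ρ(x,y·z)u`. -/
def L2 (T : TernaryFM K A) (ρ : A →ₗ[K] A →ₗ[K] V →ₗ[K] V) (μ : A →ₗ[K] V →ₗ[K] V)
    (x y z : A) (u : V) : V :=
  μ z (ρ x y u) + μ y (ρ x z u) - ρ x (T.mul y z) u

/-- `L3(x,y,z,u) = ρ(x,y)μ(z)u + ρ(x,z)μ(y)u − ρ(x,y·z)u`. -/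
def L3 (T : TernaryFM K A) (ρ : A →ₗ[K] A →ₗ[K] V →ₗ[K] V) (μ : A →ₗ[K] V →ₗ[K] V)
    (x y z : A) (u : V) : V :=
  ρ x y (μ z u) + ρ x z (μ y u) - ρ x (T.mul y z) u

/-- Representation of a ternary F-manifold algebra. -/
def IsFMRep (T : TernaryFM K A) (ρ : A →ₗ[K] A →ₗ[K] V →ₗ[K] V)
    (μ : A →ₗ[K] V →ₗ[K] V) : Prop :=
  Is3LieRep T ρ ∧ IsAssocRep T μ ∧
  (∀ x1 x2 x3 x4 u, L1 T ρ μ (T.mul x1 x2) x3 x4 u =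
      μ x1 (L1 T ρ μ x2 x3 x4 u) + μ x2 (L1 T ρ μ x1 x3 x4 u)) ∧
  (∀ x1 x2 x3 x4 u, L2 T ρ μ (T.mul x1 x2) x3 x4 u =
      μ x1 (L2 T ρ μ x2 x3 x4 u) + μ x2 (L2 T ρ μ x1 x3 x4 u)) ∧
  (∀ x1 x2 x3 x4 u, μ (leib3 T.mul T.br x1 x2 x3 x4) u =
      L2 T ρ μ x2 x3 x4 (μ x1 u) - μ x1 (L2 T ρ μ x2 x3 x4 u))

/-- Relative Rota–Baxter operator on a ternary F-manifold algebra. -/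
def IsRelRB (T : TernaryFM K A) (ρ : A →ₗ[K] A →ₗ[K] V →ₗ[K] V)
    (μ : A →ₗ[K] V →ₗ[K] V) (Tm : V →ₗ[K] A) : Prop :=
  (∀ u v, T.mul (Tm u) (Tm v) = Tm (μ (Tm u) v + μ (Tm v) u)) ∧
  (∀ u v w, T.br (Tm u) (Tm v) (Tm w) =
      Tm (ρ (Tm u) (Tm v) w + ρ (Tm v) (Tm w) u + ρ (Tm w) (Tm u) v))

end Rep

section Pre

variable {K : Type*} [Field K] {A : Type*} [AddCommGroup A] [Module K A]

/-- Cyclic sum bracket `[x,y,z]^C = {x,y,z} + {y,z,x} + {z,x,y}`. -/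
def cbr (t : A →ₗ[K] A →ₗ[K] A →ₗ[K] A) (x y z : A) : A :=
  t x y z + t y z x + t z x y

/-- Symmetrized product `x·y = x⋄y + y⋄x`. -/
def sym (d : A →ₗ[K] A →ₗ[K] A) (x y : A) : A := d x y + d y x

/-- `F1(x1,x2,x3,x4) = {x1,x2,x3⋄x4} − x3⋄{x1,x2,x4} − [x1,x2,x3]⋄x4`. -/
def F1 (d : A →ₗ[K] A →ₗ[K] A) (t : A →ₗ[K] A →ₗ[K] A →ₗ[K] A) (x1 x2 x3 x4 : A) : A :=
  t x1 x2 (d x3 x4) - d x3 (t x1 x2 x4) - d (cbr t x1 x2 x3) x4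

/-- `F2(x1,x2,x3,x4) = x3⋄{x1,x2,x4} + x2⋄{x1,x3,x4} − {x1,x2·x3,x4}`. -/
def F2 (d : A →ₗ[K] A →ₗ[K] A) (t : A →ₗ[K] A →ₗ[K] A →ₗ[K] A) (x1 x2 x3 x4 : A) : A :=
  d x3 (t x1 x2 x4) + d x2 (t x1 x3 x4) - t x1 (sym d x2 x3) x4

/-- The 3-Leibnizator of the sub-adjacent operations. -/
def Lpre (d : A →ₗ[K] A →ₗ[K] A) (t : A →ₗ[K] A →ₗ[K] A →ₗ[K] A) (x1 x2 x3 x4 : A) : A :=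
  cbr t x1 x2 (sym d x3 x4) - sym d x3 (cbr t x1 x2 x4) - sym d (cbr t x1 x2 x3) x4

/-- A 3-pre-Lie algebra. -/
structure ThreePreLie (K : Type*) [Field K] (A : Type*) [AddCommGroup A] [Module K A] where
  tri : A →ₗ[K] A →ₗ[K] A →ₗ[K] A
  tri_skew : ∀ x y z, tri x y z = - tri y x z
  preLie₁ : ∀ x1 x2 x3 x4 x5,
    tri x1 x2 (tri x3 x4 x5) =
      tri (cbr tri x1 x2 x3) x4 x5 + tri x3 (cbr tri x1 x2 x4) x5 + tri x3 x4 (tri x1 x2 x5)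
  preLie₂ : ∀ x1 x2 x3 x4 x5,
    tri (cbr tri x1 x2 x3) x4 x5 =
      tri x1 x2 (tri x3 x4 x5) + tri x2 x3 (tri x1 x4 x5) + tri x3 x1 (tri x2 x4 x5)

/-- A ternary pre-F-manifold algebra. -/
structure TernaryPreFM (K : Type*) [Field K] (A : Type*) [AddCommGroup A] [Module K A] where
  dia : A →ₗ[K] A →ₗ[K] A
  tri : A →ₗ[K] A →ₗ[K] A →ₗ[K] A
  zinbiel : ∀ x y z, dia x (dia y z) = dia (dia y x) z + dia (dia x y) z
  tri_skew : ∀ x y z, tri x y z = - tri y x z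
  preLie₁ : ∀ x1 x2 x3 x4 x5,
    tri x1 x2 (tri x3 x4 x5) =
      tri (cbr tri x1 x2 x3) x4 x5 + tri x3 (cbr tri x1 x2 x4) x5 + tri x3 x4 (tri x1 x2 x5)
  preLie₂ : ∀ x1 x2 x3 x4 x5,
    tri (cbr tri x1 x2 x3) x4 x5 =
      tri x1 x2 (tri x3 x4 x5) + tri x2 x3 (tri x1 x4 x5) + tri x3 x1 (tri x2 x4 x5)
  pf1 : ∀ x1 x2 x3 x4 x5,
    F1 dia tri (sym dia x1 x2) x3 x4 x5 =
      dia x1 (F1 dia tri x2 x3 x4 x5) + dia x2 (F1 dia tri x1 x3 x4 x5)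
  pf2 : ∀ x1 x2 x3 x4 x5,
    F2 dia tri (sym dia x1 x2) x3 x4 x5 =
      dia x1 (F2 dia tri x2 x3 x4 x5) + dia x2 (F2 dia tri x1 x3 x4 x5)
  pf3 : ∀ x1 x2 x3 x4 x5,
    dia (Lpre dia tri x1 x2 x3 x4) x5 =
      F2 dia tri x2 x3 x4 (dia x1 x5) - dia x1 (F2 dia tri x2 x3 x4 x5)

/-- A ternary pre-Nambu–Poisson algebra. -/
structure TernaryPreNP (K : Type*) [Field K] (A : Type*) [AddCommGroup A] [Module K A] where
  dia : A →ₗ[K] A →ₗ[K] A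
  tri : A →ₗ[K] A →ₗ[K] A →ₗ[K] A
  zinbiel : ∀ x y z, dia x (dia y z) = dia (dia y x) z + dia (dia x y) z
  tri_skew : ∀ x y z, tri x y z = - tri y x z
  preLie₁ : ∀ x1 x2 x3 x4 x5,
    tri x1 x2 (tri x3 x4 x5) =
      tri (cbr tri x1 x2 x3) x4 x5 + tri x3 (cbr tri x1 x2 x4) x5 + tri x3 x4 (tri x1 x2 x5)
  preLie₂ : ∀ x1 x2 x3 x4 x5,
    tri (cbr tri x1 x2 x3) x4 x5 =
      tri x1 x2 (tri x3 x4 x5) + tri x2 x3 (tri x1 x4 x5) + tri x3 x1 (tri x2 x4 x5)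
  np1 : ∀ x1 x2 x3 x4,
    tri x1 x2 (dia x3 x4) = dia x3 (tri x1 x2 x4) + dia (cbr tri x1 x2 x3) x4
  np2 : ∀ x1 x2 x3 x4,
    tri x1 (sym dia x2 x3) x4 = dia x3 (tri x1 x2 x4) + dia x2 (tri x1 x3 x4)

end Pre

/-- The coherence map `K(x,y,z,u) = [x,y,z·u] + [x,z,u·y] + [x,u,y·z]`. -/
def kmap {K : Type*} [Field K] {A : Type*} [AddCommGroup A] [Module K A]
    (T : TernaryFM K A) (x y z u : A) : A :=
  T.br x y (T.mul z u) + T.br x z (T.mul u y) + T.br x u (T.mul y z)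

section SD

variable {K : Type*} [Field K] {A V : Type*} [AddCommGroup A] [Module K A]
  [AddCommGroup V] [Module K V]

/-- Semidirect product multiplication on `A × V`. -/
def sdMul (T : TernaryFM K A) (μ : A →ₗ[K] V →ₗ[K] V) (p q : A × V) : A × V :=
  (T.mul p.1 q.1, μ p.1 q.2 + μ q.1 p.2)

/-- Semidirect product ternary bracket on `A × V`. -/
def sdBr (T : TernaryFM K A) (ρ : A →ₗ[K] A →ₗ[K] V →ₗ[K] V) (p q r : A × V) : A × V :=
  (T.br p.1 q.1 r.1, ρ p.1 q.1 r.2 - ρ p.1 r.1 q.2 + ρ q.1 r.1 p.2)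

/-- The Nijenhuis operator `N_T(x+u) = Tu` on `A × V`. -/
def nT (Tm : V →ₗ[K] A) (p : A × V) : A × V := (Tm p.2, 0)

end SD

section Helpers

variable {K : Type*} [Field K] {A : Type*} [AddCommGroup A] [Module K A]

/-- The symmetrized product as a bilinear map. -/
def symL (d : A →ₗ[K] A →ₗ[K] A) : A →ₗ[K] A →ₗ[K] A := d + d.flip

/-- The cyclic bracket as a trilinear map. -/
def cbrL (t : A →ₗ[K] A →ₗ[K] A →ₗ[K] A) : A →ₗ[K] A →ₗ[K] A →ₗ[K] A :=
  t + (LinearMap.lflip.toLinearMap ∘ₗ t).flip + LinearMap.lflip.toLinearMap ∘ₗ t.flip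

theorem symL_apply (d : A →ₗ[K] A →ₗ[K] A) (x y : A) : symL d x y = sym d x y := rfl

theorem cbrL_apply (t : A →ₗ[K] A →ₗ[K] A →ₗ[K] A) (x y z : A) :
    cbrL t x y z = cbr t x y z := rfl

theorem leib3_eq (d : A →ₗ[K] A →ₗ[K] A) (t : A →ₗ[K] A →ₗ[K] A →ₗ[K] A) (x y z w : A) :
    leib3 (symL d) (cbrL t) x y z w = Lpre d t x y z w := rfl

variable (P : TernaryPreFM K A)

theorem dia_sym (x y z : A) : P.dia (sym P.dia x y) z = P.dia x (P.dia y z) := by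
  rw [P.zinbiel x y z, sym, map_add, LinearMap.add_apply, add_comm]

theorem dia_lcomm (x y z : A) : P.dia x (P.dia y z) = P.dia y (P.dia x z) := by
  rw [P.zinbiel x y z, P.zinbiel y x z, add_comm]

theorem cbr_skew12 (x y z : A) : cbr P.tri x y z = - cbr P.tri y x z := by
  simp only [cbr]
  rw [P.tri_skew y x z, P.tri_skew x z y, P.tri_skew z y x]
  abel

theorem cbr_skew23 (x y z : A) : cbr P.tri x y z = - cbr P.tri x z y := by
  simp only [cbr]
  rw [P.tri_skew x z y, P.tri_skew z y x, P.tri_skew y x z]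
  abel

theorem cbr_cyc (x y z : A) : cbr P.tri x y z = cbr P.tri y z x := by
  simp only [cbr]
  abel

theorem cbr_fund (x1 x2 x3 x4 x5 : A) :
    cbr P.tri x1 x2 (cbr P.tri x3 x4 x5) =
      cbr P.tri (cbr P.tri x1 x2 x3) x4 x5 + cbr P.tri x3 (cbr P.tri x1 x2 x4) x5
        + cbr P.tri x3 x4 (cbr P.tri x1 x2 x5) := by
  have e : ∀ a b x y z : A, P.tri a b (cbr P.tri x y z) =
      P.tri a b (P.tri x y z) + P.tri a b (P.tri y z x) + P.tri a b (P.tri z x y) := by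
    intro a b x y z
    simp only [cbr, map_add]
  have s : P.tri x2 (cbr P.tri x3 x4 x5) x1 =
      P.tri x3 x4 (P.tri x2 x5 x1) + P.tri x4 x5 (P.tri x2 x3 x1)
        + P.tri x5 x3 (P.tri x2 x4 x1) := by
    rw [P.tri_skew, P.preLie₂, P.tri_skew x5 x2, P.tri_skew x3 x2, P.tri_skew x4 x2]
    simp only [map_neg]
    abel
  have hc : ∀ a b c : A, cbr P.tri a b c = P.tri a b c + P.tri b c a + P.tri c a b :=
    fun _ _ _ => rfl
  rw [hc x1 x2 (cbr P.tri x3 x4 x5), hc (cbr P.tri x1 x2 x3) x4 x5,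
    hc x3 (cbr P.tri x1 x2 x4) x5, hc x3 x4 (cbr P.tri x1 x2 x5), s,
    P.preLie₂ x3 x4 x5 x1 x2, e, e, e, e,
    P.preLie₁ x1 x2 x3 x4 x5, P.preLie₁ x1 x2 x4 x5 x3, P.preLie₁ x1 x2 x5 x3 x4]
  abel

theorem F1_skew (x1 x2 x3 x4 : A) :
    F1 P.dia P.tri x1 x2 x3 x4 = - F1 P.dia P.tri x2 x1 x3 x4 := by
  simp only [F1]
  rw [P.tri_skew x1 x2, P.tri_skew x1 x2, cbr_skew12 P x1 x2]
  simp only [map_neg, LinearMap.neg_apply]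
  abel

/-- Key fact: the Leibnizator acts by zero (characteristic 0 is used here). -/
theorem Lpre_dia [CharZero K] (x1 x2 x3 x4 x5 : A) :
    P.dia (Lpre P.dia P.tri x1 x2 x3 x4) x5 = 0 := by
  have h := P.pf3 x1 x2 x3 x4 x5
  have h1 := P.pf1 x3 x4 x2 x1 x5
  rw [F1_skew P (sym P.dia x3 x4) x2, F1_skew P x4 x2, F1_skew P x3 x2] at h1
  have e : F2 P.dia P.tri x2 x3 x4 (P.dia x1 x5) - P.dia x1 (F2 P.dia P.tri x2 x3 x4 x5)
      = P.dia x4 (F1 P.dia P.tri x2 x3 x1 x5) + P.dia x3 (F1 P.dia P.tri x2 x4 x1 x5)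
        - F1 P.dia P.tri x2 (sym P.dia x3 x4) x1 x5
        - P.dia (Lpre P.dia P.tri x1 x2 x3 x4) x5 := by
    simp only [F1, F2, Lpre, map_sub, map_add, LinearMap.sub_apply]
    rw [sym.eq_1 P.dia x3 (cbr P.tri x1 x2 x4), add_comm (P.dia x3 _), ← sym.eq_1]
    rw [dia_lcomm P x1 x4, dia_lcomm P x1 x3, dia_sym, dia_sym,
      dia_lcomm P _ x3, dia_lcomm P _ x4,
      ← cbr_cyc P x1 x2 x3, ← cbr_cyc P x1 x2 x4, ← cbr_cyc P x1 x2 (sym P.dia x3 x4)]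
    abel
  rw [← h] at e
  simp only [map_neg] at h1
  have h2 : (2 : K) • P.dia (Lpre P.dia P.tri x1 x2 x3 x4) x5 = 0 := by
    rw [two_smul]
    have h1' : F1 P.dia P.tri x2 (sym P.dia x3 x4) x1 x5 =
        P.dia x3 (F1 P.dia P.tri x2 x4 x1 x5) + P.dia x4 (F1 P.dia P.tri x2 x3 x1 x5) := by
      rw [← neg_inj, h1]; abel
    rw [h1'] at e
    nth_rewrite 1 [e]
    abel
  exact (smul_eq_zero.mp h2).resolve_left two_ne_zero

theorem Lpre_eq (x1 x2 x3 x4 : A) : Lpre P.dia P.tri x1 x2 x3 x4 =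
    F1 P.dia P.tri x1 x2 x3 x4 + F1 P.dia P.tri x1 x2 x4 x3
      - F2 P.dia P.tri x2 x3 x4 x1 + F2 P.dia P.tri x1 x3 x4 x2 := by
  have hc : ∀ a b c : A, cbr P.tri a b c = P.tri a b c + P.tri b c a + P.tri c a b :=
    fun _ _ _ => rfl
  have hs : ∀ a b : A, sym P.dia a b = P.dia a b + P.dia b a := fun _ _ => rfl
  simp only [Lpre, F1, F2]
  rw [hs x3 (cbr P.tri x1 x2 x4), hs (cbr P.tri x1 x2 x3) x4,
    P.tri_skew x1 (sym P.dia x3 x4), P.tri_skew x1 x4, P.tri_skew x1 x3,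
    hc x1 x2 (sym P.dia x3 x4)]
  nth_rewrite 1 [hs x3 x4]
  have e3 : P.dia x4 (cbr P.tri x1 x2 x3) = P.dia x4 (P.tri x1 x2 x3)
      + P.dia x4 (P.tri x2 x3 x1) + P.dia x4 (P.tri x3 x1 x2) := by simp only [hc, map_add]
  have e4 : P.dia x3 (cbr P.tri x1 x2 x4) = P.dia x3 (P.tri x1 x2 x4)
      + P.dia x3 (P.tri x2 x4 x1) + P.dia x3 (P.tri x4 x1 x2) := by simp only [hc, map_add]
  rw [e3, e4]
  simp only [map_add, map_neg]
  abel

theorem Lpre_leib [CharZero K] (x1 x2 x3 x4 x5 : A) :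
    Lpre P.dia P.tri (sym P.dia x1 x2) x3 x4 x5 =
      sym P.dia x1 (Lpre P.dia P.tri x2 x3 x4 x5)
        + sym P.dia x2 (Lpre P.dia P.tri x1 x3 x4 x5) := by
  rw [sym.eq_1 P.dia x1 (Lpre P.dia P.tri x2 x3 x4 x5),
    sym.eq_1 P.dia x2 (Lpre P.dia P.tri x1 x3 x4 x5), Lpre_dia, Lpre_dia]
  have a1 := P.pf3 x1 x3 x4 x5 x2
  have a2 := P.pf3 x2 x3 x4 x5 x1
  rw [Lpre_dia, eq_comm, sub_eq_zero] at a1 a2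
  have a : F2 P.dia P.tri x3 x4 x5 (sym P.dia x1 x2) =
      P.dia x1 (F2 P.dia P.tri x3 x4 x5 x2) + P.dia x2 (F2 P.dia P.tri x3 x4 x5 x1) := by
    rw [← a1, ← a2]
    simp only [F2, sym.eq_1 P.dia x1 x2, map_add]
    abel
  rw [Lpre_eq, Lpre_eq, Lpre_eq, P.pf1, P.pf1, P.pf2, a]
  simp only [map_add, map_sub]
  abel

/-- The sub-adjacent ternary F-manifold algebra. -/
def subAdj [CharZero K] : TernaryFM K A where
  mul := symL P.dia
  br := cbrL P.tri
  mul_comm x y := by simp only [symL_apply, sym, add_comm]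
  mul_assoc x y z := by
    simp only [symL_apply]
    rw [sym.eq_1 P.dia (sym P.dia x y) z, sym.eq_1 P.dia x (sym P.dia y z), dia_sym, dia_sym]
    simp only [sym, map_add]
    rw [dia_lcomm P z x y, dia_lcomm P z y x]
    abel
  br_skew₁₂ x y z := cbr_skew12 P x y z
  br_skew₂₃ x y z := cbr_skew23 P x y z
  fund := cbr_fund P
  leib := Lpre_leib P

end Helpers

/-- `(A; 𝕃, L_⋄)` is a representation of the sub-adjacent
ternary F-manifold algebra `A^c` of a ternary pre-F-manifold algebra. -/
theorem stmt10 {K : Type*} [Field K] [CharZero K]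
    {A : Type*} [AddCommGroup A] [Module K A] (P : TernaryPreFM K A) :
    ∃ T : TernaryFM K A,
      (∀ x y, T.mul x y = sym P.dia x y) ∧
      (∀ x y z, T.br x y z = cbr P.tri x y z) ∧
      IsFMRep T P.tri P.dia := by
  refine ⟨subAdj P, fun _ _ => rfl, fun _ _ _ => rfl, ⟨?_, ?_, ?_⟩, ?_, P.pf1, P.pf2, P.pf3⟩
  · intro x y
    ext z
    exact P.tri_skew x y z
  · intro x1 x2 x3 x4
    ext z
    change P.tri x1 x2 (P.tri x3 x4 z) - P.tri x3 x4 (P.tri x1 x2 z)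
      = P.tri (cbr P.tri x1 x2 x3) x4 z - P.tri (cbr P.tri x1 x2 x4) x3 z
    rw [P.preLie₁ x1 x2 x3 x4 z, P.tri_skew x3 (cbr P.tri x1 x2 x4)]
    abel
  · intro x1 x2 x3 x4
    ext z
    exact P.preLie₂ x1 x2 x3 x4 z
  · intro x y
    ext z
    exact dia_sym P x y z
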